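/- Let 4 ≤ p < q, n = p + q, and suppose 2p = q + 4. Every tree T ∈ 𝒯_n^{p,q} that is isomorphic to none of B_{p,q}^{0,0}, B_{p,q}^{0,1}, B_{p,q}^{2,0}, D_{p,q}^{0,1} satisfies T ≺_s D_{p,q}^{0,1}; that is, in this case D_{p,q}^{0,1} is the unique fourth last tree in the S-order among 𝒯_n^{p,q}. -/

import Mathlib

open SimpleGraph

open scoped Classical in
/-- The adjacency matrix of a simple graph, with real entries. -/
noncomputable def adjMat {V : Type*} [Fintype V] (G : SimpleGraph V) : Matrix V V ℝ :=
  Matrix.of fun a b => if G.Adj a b then 1 else 0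

/-- The `k`-th spectral moment `S_k(G) = tr(A(G)^k)`. -/
noncomputable def spectralMoment {V : Type*} [Fintype V] [DecidableEq V]
    (G : SimpleGraph V) (k : ℕ) : ℝ :=
  Matrix.trace (adjMat G ^ k)

/-- `SLt G₁ G₂` means `G₁ ≺_s G₂`: for some `k` with `1 ≤ k ≤ n - 1`,
`S_i(G₁) = S_i(G₂)` for all `i < k` and `S_k(G₁) < S_k(G₂)`. -/
def SLt {V : Type*} [Fintype V] [DecidableEq V] (G₁ G₂ : SimpleGraph V) : Prop :=
  ∃ k : ℕ, 1 ≤ k ∧ k ≤ Fintype.card V - 1 ∧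
    (∀ i < k, spectralMoment G₁ i = spectralMoment G₂ i) ∧
    spectralMoment G₁ k < spectralMoment G₂ k

/-- The tree `B_{p,q}^{k,l}` on `p + q` vertices: vertex `0 = u` is adjacent to `1 = v`
and to the `q - 1` vertices `2, …, q`; the distinguished neighbor `2` of `u` carries the
`k` pendant leaves `q+1, …, q+k`; the `l` neighbors `3, …, l+2` of `u` carry one pendant
leaf each (`q+k+j` is attached to `j+2` for `1 ≤ j ≤ l`); and `v` carries the
`p - k - l - 1` pendant leaves `q+k+l+1, …, p+q-1`. -/
def BTree (p q k l : ℕ) : SimpleGraph (Fin (p + q)) :=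
  SimpleGraph.fromRel (fun a b =>
    (a.val = 0 ∧ b.val = 1) ∨
    (a.val = 0 ∧ 2 ≤ b.val ∧ b.val ≤ q) ∨
    (a.val = 2 ∧ q + 1 ≤ b.val ∧ b.val ≤ q + k) ∨
    (q + k + 1 ≤ b.val ∧ b.val ≤ q + k + l ∧ a.val = b.val - (q + k) + 2) ∨
    (a.val = 1 ∧ q + k + l + 1 ≤ b.val))

/-- The tree `D_{p,q}^{k,l}` on `p + q` vertices: vertex `1 = v` is adjacent to `0 = u`
and to the `p - 1` vertices `2, …, p`; the distinguished neighbor `2` of `v` carries the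
`k` pendant leaves `p+1, …, p+k`; the `l` neighbors `3, …, l+2` of `v` carry one pendant
leaf each; and `u` carries the `q - k - l - 1` pendant leaves `p+k+l+1, …, p+q-1`. -/
def DTree (p q k l : ℕ) : SimpleGraph (Fin (p + q)) :=
  SimpleGraph.fromRel (fun a b =>
    (a.val = 0 ∧ b.val = 1) ∨
    (a.val = 1 ∧ 2 ≤ b.val ∧ b.val ≤ p) ∨
    (a.val = 2 ∧ p + 1 ≤ b.val ∧ b.val ≤ p + k) ∨
    (p + k + 1 ≤ b.val ∧ b.val ≤ p + k + l ∧ a.val = b.val - (p + k) + 2) ∨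
    (a.val = 0 ∧ p + k + l + 1 ≤ b.val))

/-- `T ∈ 𝒯_{p+q}^{p,q}`: `T` is a tree on `p + q` vertices with a `(p,q)`-bipartition. -/
def TreeBip (p q : ℕ) (G : SimpleGraph (Fin (p + q))) : Prop :=
  G.IsTree ∧ ∃ A : Finset (Fin (p + q)), A.card = p ∧
    ∀ ⦃x y : Fin (p + q)⦄, G.Adj x y → (x ∈ A ↔ y ∉ A)

/-!
Bipartiteness kills the odd spectral moments, `S_2 = ∑ deg`, and in an acyclic graph, where two
vertices have at most one common neighbor, `S_4 = 2 ∑ deg² - ∑ deg`. So trees on the same vertices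
agree up to `S_3`, and the S-order is decided by `∑ deg²`, equivalently by `∑ (deg - 1)²`, as soon
as these differ.

In a tree with classes of sizes `p` and `q`, the numbers `deg - 1` sum to `q - 1` on the first class
and to `p - 1` on the second. A vertex adjacent to the whole opposite class forces depth two, and
such a tree is determined by the degrees of the children of its root. Among these trees, squares as
large as those of `D^{0,1}` leave only `B^{0,0}`, `B^{0,1}`, `B^{2,0}` and `D^{0,1}`; without such a
vertex the squares are too small. The other trees of depth two with a root of degree `q` have sums
below `(p - 3)² + 4 + (q - 1)²`, the value for `B^{2,0}`, which is at most the value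
`(p - 1)² + (q - 2)² + 1` for `D^{0,1}` exactly when `q + 4 ≤ 2p`.
-/

open Finset

section SpectralMoments

variable {V : Type*} [Fintype V] {G H : SimpleGraph V}

theorem adjMatrix_sq_apply {α : Type*} [Semiring α] [DecidableEq V] (G : SimpleGraph V)
    [DecidableRel G.Adj] (a b : V) :
    (G.adjMatrix α ^ 2) a b = Fintype.card (G.commonNeighbors a b) := by
  rw [adjMatrix_pow_apply_eq_card_walk]
  exact congrArg _ (Fintype.card_congr (G.walkLengthTwoEquivCommonNeighbors a b))

theorem sum_card_commonNeighbors (G : SimpleGraph V) [DecidableRel G.Adj] :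
    ∑ a, ∑ b, Fintype.card (G.commonNeighbors a b) = ∑ v, G.degree v ^ 2 := by
  classical
  have h a b : Fintype.card (G.commonNeighbors a b) =
      ∑ c, G.adjMatrix ℕ c a * G.adjMatrix ℕ c b := by
    rw [← Nat.cast_id (Fintype.card _), ← adjMatrix_sq_apply, pow_two, Matrix.mul_apply]
    simp only [adjMatrix_apply, G.adj_comm]
  simp_rw [h]
  rw [sum_congr rfl fun a _ => sum_comm, sum_comm]
  refine sum_congr rfl fun c _ => ?_
  simp only [← sum_mul_sum, adjMatrix_apply, sum_boole, Nat.cast_id, ← neighborFinset_eq_filter,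
    card_neighborFinset_eq_degree, sq]

theorem card_commonNeighbors_le_one [DecidableRel G.Adj] (hG : G.IsAcyclic) {a b : V}
    (hab : a ≠ b) : Fintype.card (G.commonNeighbors a b) ≤ 1 := by
  refine Fintype.card_le_one_iff.2 fun ⟨c, hac, hbc⟩ ⟨d, had, hbd⟩ => Subtype.ext ?_
  have isPath e (h1 : G.Adj a e) (h2 : G.Adj b e) :
      (Walk.cons h1 (Walk.cons h2.symm Walk.nil)).IsPath := by
    simp [hab, h1.ne, h2.ne']
  have := (hG.subsingleton_path a b).elim ⟨_, isPath c hac hbc⟩ ⟨_, isPath d had hbd⟩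
  simpa only [Walk.cons.injEq] using (Walk.cons.inj (Subtype.ext_iff.1 this)).1

theorem adjMat_eq_adjMatrix (G : SimpleGraph V) [DecidableRel G.Adj] :
    adjMat G = G.adjMatrix ℝ := by
  ext a b
  simp only [adjMat, Matrix.of_apply, adjMatrix_apply]
  congr

variable [DecidableEq V]

theorem spectralMoment_zero (G : SimpleGraph V) : spectralMoment G 0 = Fintype.card V := by
  simp [spectralMoment]

theorem spectralMoment_eq_zero_of_odd (hG : G.IsBipartite) {k : ℕ} (hk : Odd k) :
    spectralMoment G k = 0 := by
  classical
  rw [spectralMoment, adjMat_eq_adjMatrix, Matrix.trace]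
  refine sum_eq_zero fun v _ => ?_
  rw [Matrix.diag_apply, adjMatrix_pow_apply_eq_card_walk, Nat.cast_eq_zero,
    Fintype.card_eq_zero_iff]
  refine ⟨fun w => Nat.not_even_iff_odd.2 hk ?_⟩
  rw [← w.2]
  exact two_colorable_iff_forall_loop_even.1 hG v w.1

theorem spectralMoment_two (G : SimpleGraph V) [DecidableRel G.Adj] :
    spectralMoment G 2 = (∑ v, G.degree v : ℕ) := by
  simp only [spectralMoment, adjMat_eq_adjMatrix, pow_two, Matrix.trace, Matrix.diag_apply,
    adjMatrix_mul_self_apply_self, Nat.cast_sum]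

theorem spectralMoment_four (G : SimpleGraph V) [DecidableRel G.Adj] :
    spectralMoment G 4 = ∑ a, ∑ b, (Fintype.card (G.commonNeighbors a b) : ℝ) ^ 2 := by
  rw [spectralMoment, adjMat_eq_adjMatrix, show 4 = 2 + 2 from rfl, pow_add, Matrix.trace]
  refine sum_congr rfl fun a _ => ?_
  rw [Matrix.diag_apply, Matrix.mul_apply]
  refine sum_congr rfl fun b _ => ?_
  simp only [adjMatrix_sq_apply, G.commonNeighbors_symm b a, sq]

theorem spectralMoment_four_add_sum_degree (G : SimpleGraph V) [DecidableRel G.Adj] :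
    spectralMoment G 4 + (∑ v, G.degree v : ℕ) = (2 * ∑ v, G.degree v ^ 2 : ℕ) +
      ∑ a, ∑ b ∈ univ.erase a, (Fintype.card (G.commonNeighbors a b) : ℝ) *
        (Fintype.card (G.commonNeighbors a b) - 1) := by
  have hself a : Fintype.card (G.commonNeighbors a a) = G.degree a := by
    simp only [commonNeighbors, Set.inter_self, card_neighborSet_eq_degree]
  have hcod : (∑ a, ∑ b, (Fintype.card (G.commonNeighbors a b) : ℝ)) =
      ∑ v, (G.degree v : ℝ) ^ 2 := by
    exact_mod_cast sum_card_commonNeighbors G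
  simp only [sum_erase_eq_sub, mem_univ, hself, spectralMoment_four, mul_sub, mul_one,
    sum_sub_distrib, ← sq, hcod]
  push_cast
  ring

theorem two_mul_sum_degree_sq_le (G : SimpleGraph V) [DecidableRel G.Adj] :
    (2 * ∑ v, G.degree v ^ 2 : ℕ) ≤ spectralMoment G 4 + (∑ v, G.degree v : ℕ) := by
  rw [spectralMoment_four_add_sum_degree]
  refine le_add_of_nonneg_right (sum_nonneg fun a _ => sum_nonneg fun b _ => ?_)
  obtain h | h := (Fintype.card (G.commonNeighbors a b)).eq_zero_or_pos
  · simp [h]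
  · exact mul_nonneg (Nat.cast_nonneg _) (sub_nonneg.2 (Nat.one_le_cast.2 h))

theorem spectralMoment_four_add_sum_degree_of_isAcyclic [DecidableRel G.Adj]
    (hG : G.IsAcyclic) :
    spectralMoment G 4 + (∑ v, G.degree v : ℕ) = (2 * ∑ v, G.degree v ^ 2 : ℕ) := by
  rw [spectralMoment_four_add_sum_degree, add_eq_left]
  refine sum_eq_zero fun a _ => sum_eq_zero fun b hb => ?_
  obtain h | h := Nat.le_one_iff_eq_zero_or_eq_one.1
    (card_commonNeighbors_le_one hG (ne_of_mem_erase hb).symm) <;> simp [h]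

theorem SLt.of_sum_degree_sq_lt [DecidableRel G.Adj] [DecidableRel H.Adj]
    (hV : 5 ≤ Fintype.card V) (hG : G.IsAcyclic) (hH : H.IsBipartite)
    (hdeg : ∑ v, G.degree v = ∑ v, H.degree v)
    (hsq : ∑ v, G.degree v ^ 2 < ∑ v, H.degree v ^ 2) : SLt G H := by
  refine ⟨4, by norm_num, by lia, fun i hi => ?_, ?_⟩
  · rcases i.even_or_odd with heven | hodd
    · obtain rfl | rfl : i = 0 ∨ i = 2 := by grind
      · simp only [spectralMoment_zero]
      · simp only [spectralMoment_two, hdeg]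
    · rw [spectralMoment_eq_zero_of_odd hG.isBipartite hodd, spectralMoment_eq_zero_of_odd hH hodd]
  · have hGm := spectralMoment_four_add_sum_degree_of_isAcyclic hG
    have hHm := two_mul_sum_degree_sq_le H
    rw [← hdeg] at hHm
    have : ((2 * ∑ v, G.degree v ^ 2 : ℕ) : ℝ) < (2 * ∑ v, H.degree v ^ 2 : ℕ) := by
      exact_mod_cast Nat.mul_lt_mul_of_pos_left hsq two_pos
    linarith

end SpectralMoments

section SumSq

variable {ι : Type*} {s : Finset ι} {e : ι → ℕ} {m r : ℕ}

theorem sum_sq_le_mul_sum (h : ∀ i ∈ s, e i ≤ m) : ∑ i ∈ s, e i ^ 2 ≤ m * ∑ i ∈ s, e i := by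
  rw [mul_sum]
  exact sum_le_sum fun i hi => (sq (e i)).trans_le (Nat.mul_le_mul_right _ (h i hi))

theorem sum_sq_le_sq_add_mul {x : ι} (hx : x ∈ s) (hsum : ∑ i ∈ s, e i = e x + r)
    (h : ∀ i ∈ s, i ≠ x → e i ≤ m) : ∑ i ∈ s, e i ^ 2 ≤ e x ^ 2 + m * r := by
  classical
  have herase : ∑ i ∈ s.erase x, e i = r := by
    rw [← add_sum_erase s e hx] at hsum
    lia
  rw [← add_sum_erase s _ hx, ← herase]
  exact Nat.add_le_add_left
    (sum_sq_le_mul_sum fun i hi => h i (mem_of_mem_erase hi) (ne_of_mem_erase hi)) _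

theorem sum_sq_le_sq_add_sq (hsum : ∑ i ∈ s, e i = m + r) (hr : r ≤ m)
    (h : ∀ i ∈ s, e i ≤ m) : ∑ i ∈ s, e i ^ 2 ≤ m ^ 2 + r ^ 2 := by
  by_cases hle : ∀ i ∈ s, e i ≤ r
  · have := sum_sq_le_mul_sum hle
    rw [hsum] at this
    nlinarith
  · push Not at hle
    obtain ⟨x, hx, hrx⟩ := hle
    obtain ⟨b, hb⟩ := Nat.exists_eq_add_of_le (h x hx)
    have := sum_sq_le_sq_add_mul (m := r + b) (r := r + b) hx (by rw [hsum]; lia) fun i hi hix => by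
      have := add_le_sum (f := e) (fun _ _ => Nat.zero_le _) hi hx hix
      lia
    nlinarith

theorem sum_sq_lt_sq_add_one (hsum : ∑ i ∈ s, e i = m + 2) (h : ∀ i ∈ s, e i ≤ m) :
    ∑ i ∈ s, e i ^ 2 < (m + 1) ^ 2 + 1 := by
  have := sum_sq_le_mul_sum h
  rw [hsum] at this
  nlinarith

theorem sum_sq_lt_sq_add_four (hsum : ∑ i ∈ s, e i = m + 2) (h : ∀ i ∈ s, e i ≤ m)
    (hne : ∀ x ∈ s, ∀ y ∈ s, x ≠ y → e x = m → e y ≠ 2) : ∑ i ∈ s, e i ^ 2 < m ^ 2 + 4 := by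
  by_cases hm : ∃ x ∈ s, e x = m
  · obtain ⟨x, hx, rfl⟩ := hm
    have := sum_sq_le_sq_add_mul (m := 1) hx hsum fun i hi hix => by
      have := add_le_sum (f := e) (fun _ _ => Nat.zero_le _) hx hi hix.symm
      have := hne x hx i hi hix.symm rfl
      lia
    lia
  · have hlt : ∀ i ∈ s, e i < m := fun i hi => (h i hi).lt_of_ne fun hi' => hm ⟨i, hi, hi'⟩
    obtain _ | k := m
    · rw [sum_eq_zero fun i hi => absurd (hlt i hi) (Nat.not_lt_zero _)]
      lia
    have hle : ∀ i ∈ s, e i ≤ k := fun i hi => Nat.le_of_lt_succ (hlt i hi)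
    obtain hk | hk := le_or_gt 3 k
    · have := sum_sq_le_sq_add_sq (r := 3) hsum hk hle
      nlinarith
    · have := sum_sq_le_mul_sum hle
      rw [hsum] at this
      interval_cases k <;> lia

end SumSq

section DepthTwo

/-- `G` is a tree of depth at most two rooted at `u`: every vertex other than `u` and its
neighbors is a leaf attached to a neighbor of `u`. -/
structure IsDepthTwoTree {V : Type*} (G : SimpleGraph V) (u : V) : Prop where
  not_adj_of_adj : ∀ ⦃c d⦄, G.Adj u c → G.Adj u d → ¬ G.Adj c d
  exists_parent : ∀ ⦃v⦄, v ≠ u → ¬ G.Adj u v → ∃ c, G.Adj u c ∧ ∀ x, G.Adj v x ↔ x = c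

/-- The shape of a tree of depth two, with the root `none`, its children `some (Sum.inl i)`, and
`some (Sum.inr i)` standing for all the leaves below the child `i`. -/
def depthTwoPattern (ι : Type*) : SimpleGraph (Option (ι ⊕ ι)) :=
  SimpleGraph.fromRel fun a b =>
    (a = none ∧ ∃ i, b = some (Sum.inl i)) ∨ ∃ i, a = some (Sum.inl i) ∧ b = some (Sum.inr i)

/-- `f` labels each vertex with its class in `depthTwoPattern`, where `c` numbers the children. -/
structure IsDepthTwoLabel {V ι : Type*} (G : SimpleGraph V) (u : V) (c : ι ≃ G.neighborSet u)
    (f : V → Option (ι ⊕ ι)) : Prop where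
  eq_none_iff : ∀ v, f v = none ↔ v = u
  eq_inl_iff : ∀ v i, f v = some (Sum.inl i) ↔ v = c i
  eq_inr_iff : ∀ v i, f v = some (Sum.inr i) ↔ v ≠ u ∧ G.Adj (c i) v

theorem depthTwoPattern_adj {ι : Type*} {a b : Option (ι ⊕ ι)} :
    (depthTwoPattern ι).Adj a b ↔
      ((a = none ∧ ∃ i, b = some (Sum.inl i)) ∨
        ∃ i, a = some (Sum.inl i) ∧ b = some (Sum.inr i)) ∨
      (b = none ∧ ∃ i, a = some (Sum.inl i)) ∨
        ∃ i, b = some (Sum.inl i) ∧ a = some (Sum.inr i) := by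
  rw [depthTwoPattern, fromRel_adj]
  exact and_iff_right_of_imp (by grind)

theorem exists_equiv_of_card_fiber_eq {V W κ : Type*} [Fintype V] [Fintype W] [DecidableEq κ]
    (f : V → κ) (g : W → κ) (h : ∀ k, #{x | f x = k} = #{x | g x = k}) :
    ∃ e : V ≃ W, ∀ x, g (e x) = f x := by
  have fiberEquiv k : Nonempty ({x // f x = k} ≃ {x // g x = k}) := by
    rw [← Fintype.card_eq, Fintype.card_subtype, Fintype.card_subtype, h]
  let E k := (fiberEquiv k).some
  exact ⟨(Equiv.sigmaFiberEquiv f).symm.trans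
    ((Equiv.sigmaCongrRight E).trans (Equiv.sigmaFiberEquiv g)), fun x => (E (f x) ⟨x, rfl⟩).2⟩

variable {V W ι : Type*} {G : SimpleGraph V} {H : SimpleGraph W} {u : V} {w : W}

theorem IsDepthTwoTree.isBipartite (hG : IsDepthTwoTree G u) : G.IsBipartite := by
  refine IsBipartiteWith.isBipartite (s := G.neighborSet u) (t := (G.neighborSet u)ᶜ)
    ⟨disjoint_compl_right, fun x y hxy => ?_⟩
  by_cases hx : G.Adj u x
  · exact Or.inl ⟨hx, fun hy => hG.not_adj_of_adj hx hy hxy⟩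
  refine Or.inr ⟨hx, ?_⟩
  rcases eq_or_ne x u with rfl | hxu
  · exact hxy
  · obtain ⟨c, hc, hxc⟩ := hG.exists_parent hxu hx
    rwa [mem_neighborSet, (hxc y).1 hxy]

theorem IsDepthTwoTree.exists_isDepthTwoLabel (hG : IsDepthTwoTree G u)
    (c : ι ≃ G.neighborSet u) : ∃ f, IsDepthTwoLabel G u c f := by
  have hlabel v : ∃ k, (k = none ↔ v = u) ∧ (∀ i, k = some (Sum.inl i) ↔ v = c i) ∧
      ∀ i, k = some (Sum.inr i) ↔ v ≠ u ∧ G.Adj (c i) v := by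
    have hadj i : G.Adj u (c i) := (c i).2
    rcases eq_or_ne v u with rfl | hvu
    · exact ⟨none, by simp, fun i => by simpa using (hadj i).ne, by simp⟩
    by_cases huv : G.Adj u v
    · refine ⟨some (Sum.inl (c.symm ⟨v, huv⟩)), by simpa using hvu, fun i => ?_, fun i => ?_⟩
      · simp [Equiv.symm_apply_eq, Subtype.ext_iff]
      · simpa using fun _ => hG.not_adj_of_adj (hadj i) huv
    · obtain ⟨d, hd, hvd⟩ := hG.exists_parent hvu huv
      refine ⟨some (Sum.inr (c.symm ⟨d, hd⟩)), by simpa using hvu, fun i => ?_, fun i => ?_⟩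
      · simpa using fun h : v = c i => huv (h ▸ hadj i)
      · simp [Equiv.symm_apply_eq, Subtype.ext_iff, hvu, G.adj_comm _ v, hvd, eq_comm (a := d)]
  choose f hf using hlabel
  exact ⟨f, fun v => (hf v).1, fun v => (hf v).2.1, fun v => (hf v).2.2⟩

theorem IsDepthTwoLabel.adj_iff {c : ι ≃ G.neighborSet u} {f : V → Option (ι ⊕ ι)}
    (hf : IsDepthTwoLabel G u c f) (hG : IsDepthTwoTree G u) (x y : V) :
    G.Adj x y ↔ (depthTwoPattern ι).Adj (f x) (f y) := by
  have hroot x y : (f x = none ∧ ∃ i, f y = some (Sum.inl i)) ↔ x = u ∧ G.Adj u y := by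
    simp only [hf.eq_none_iff, hf.eq_inl_iff]
    exact and_congr_right fun _ =>
      ⟨fun ⟨i, hi⟩ => hi ▸ (c i).2, fun hy => ⟨c.symm ⟨y, hy⟩, by simp⟩⟩
  have hleaf x y : (∃ i, f x = some (Sum.inl i) ∧ f y = some (Sum.inr i)) ↔
      G.Adj u x ∧ y ≠ u ∧ G.Adj x y := by
    simp only [hf.eq_inl_iff, hf.eq_inr_iff]
    exact ⟨fun ⟨i, hx, hy⟩ => hx ▸ ⟨(c i).2, hy⟩, fun ⟨hx, hy⟩ => ⟨c.symm ⟨x, hx⟩, by simpa⟩⟩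
  simp only [depthTwoPattern_adj, hroot, hleaf]
  constructor
  · intro hxy
    rcases eq_or_ne x u with rfl | hxu
    · exact Or.inl (Or.inl ⟨rfl, hxy⟩)
    rcases eq_or_ne y u with rfl | hyu
    · exact Or.inr (Or.inl ⟨rfl, hxy.symm⟩)
    by_cases hx : G.Adj u x
    · exact Or.inl (Or.inr ⟨hx, hyu, hxy⟩)
    · obtain ⟨d, hd, hxd⟩ := hG.exists_parent hxu hx
      exact Or.inr (Or.inr ⟨(hxd y).1 hxy ▸ hd, hxu, hxy.symm⟩)
  · rintro ((⟨rfl, h⟩ | ⟨-, -, h⟩) | ⟨rfl, h⟩ | ⟨-, -, h⟩)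
    exacts [h, h, h.symm, h.symm]

theorem IsDepthTwoLabel.card_fiber [Fintype V] [DecidableEq ι] [DecidableRel G.Adj]
    {c : ι ≃ G.neighborSet u} {f : V → Option (ι ⊕ ι)} (hf : IsDepthTwoLabel G u c f)
    (k : Option (ι ⊕ ι)) :
    #{v | f v = k} = k.elim 1 (Sum.elim (fun _ => 1) fun i => G.degree (c i) - 1) := by
  classical
  rcases k with _ | i | i
  · exact card_eq_one.2 ⟨u, by ext; simp [hf.eq_none_iff]⟩
  · exact card_eq_one.2 ⟨c i, by ext; simp [hf.eq_inl_iff]⟩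
  · have hmem : u ∈ G.neighborFinset (c i) := (mem_neighborFinset _ _ _).2 (c i).2.symm
    rw [Option.elim_some, Sum.elim_inr, ← card_neighborFinset_eq_degree, ← card_erase_of_mem hmem]
    congr 1
    ext v
    simp [hf.eq_inr_iff]

theorem IsDepthTwoTree.nonempty_iso_of_equiv [Fintype V] [Fintype W] [DecidableRel G.Adj]
    [DecidableRel H.Adj] (hG : IsDepthTwoTree G u) (hH : IsDepthTwoTree H w)
    (ψ : G.neighborSet u ≃ H.neighborSet w) (hψ : ∀ c, H.degree (ψ c) = G.degree c) :
    Nonempty (G ≃g H) := by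
  classical
  obtain ⟨f, hf⟩ := hG.exists_isDepthTwoLabel (Equiv.refl _)
  obtain ⟨g, hg⟩ := hH.exists_isDepthTwoLabel ψ
  obtain ⟨e, he⟩ := exists_equiv_of_card_fiber_eq f g fun k => by
    simp only [hf.card_fiber, hg.card_fiber, hψ, Equiv.refl_apply]
    rfl
  exact ⟨⟨e, fun {x y} => by rw [hf.adj_iff hG, hg.adj_iff hH, he, he]⟩⟩

theorem card_filter_degree_eq_count [Fintype V] [DecidableRel G.Adj] (u : V) (k : ℕ) :
    #{c : G.neighborSet u | G.degree c = k} =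
      ((G.neighborFinset u).val.map (G.degree ·)).count k := by
  rw [Multiset.count_map, ← filter_val, ← card_def]
  refine card_bij (fun c _ => c) (fun c hc => ?_) (fun _ _ _ _ => Subtype.ext) fun c hc => ?_
  · exact mem_filter.2 ⟨(mem_neighborFinset _ _ _).2 c.2, (mem_filter.1 hc).2.symm⟩
  · rw [mem_filter, mem_neighborFinset] at hc
    exact ⟨⟨c, hc.1⟩, by simpa using hc.2.symm, rfl⟩

theorem IsDepthTwoTree.nonempty_iso [Fintype V] [Fintype W] [DecidableRel G.Adj]
    [DecidableRel H.Adj] (hG : IsDepthTwoTree G u) (hH : IsDepthTwoTree H w)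
    (h : (G.neighborFinset u).val.map (G.degree ·) = (H.neighborFinset w).val.map (H.degree ·)) :
    Nonempty (G ≃g H) := by
  obtain ⟨ψ, hψ⟩ := exists_equiv_of_card_fiber_eq (fun c : G.neighborSet u => G.degree c)
    (fun c : H.neighborSet w => H.degree c) fun k => by
      rw [card_filter_degree_eq_count, card_filter_degree_eq_count, h]
  exact hG.nonempty_iso_of_equiv hH ψ hψ

theorem IsDepthTwoTree.degree_eq_one [Fintype V] [DecidableRel G.Adj] (hG : IsDepthTwoTree G u)
    {v : V} (hvu : v ≠ u) (huv : ¬ G.Adj u v) : G.degree v = 1 := by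
  obtain ⟨c, -, hc⟩ := hG.exists_parent hvu huv
  exact degree_eq_one_iff_existsUnique_adj.2 ⟨c, (hc c).2 rfl, fun x hx => (hc x).1 hx⟩

theorem IsDepthTwoTree.sum_comp_degree [Fintype V] [DecidableRel G.Adj] {M : Type*}
    [AddCommMonoid M] (hG : IsDepthTwoTree G u) (φ : ℕ → M) :
    ∑ v, φ (G.degree v) = φ (G.degree u) + ∑ c ∈ G.neighborFinset u, φ (G.degree c) +
      (Fintype.card V - (G.degree u + 1)) • φ 1 := by
  classical
  have hu : u ∉ G.neighborFinset u := by simp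
  rw [← sum_cons hu (f := fun v => φ (G.degree v)), ← card_neighborFinset_eq_degree,
    ← card_cons hu, ← card_compl, ← sum_const,
    ← sum_add_sum_compl (cons u _ hu)]
  congr 1
  refine sum_congr rfl fun v hv => ?_
  rw [mem_compl, mem_cons, mem_neighborFinset, not_or] at hv
  rw [hG.degree_eq_one hv.1 hv.2]

end DepthTwo

section TwoArms

theorem map_val_eq_cons_cons_replicate {α β : Type*} {s : Finset α} {f : α → β} {x y : α} {b : β}
    (hx : x ∈ s) (hy : y ∈ s) (hxy : x ≠ y) (h : ∀ i ∈ s, i ≠ x → i ≠ y → f i = b) :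
    s.val.map f = f x ::ₘ f y ::ₘ Multiset.replicate (#s - 2) b := by
  classical
  have hyx : y ∈ s.erase x := mem_erase.2 ⟨hxy.symm, hy⟩
  rw [← insert_erase hx, insert_val_of_notMem (notMem_erase x s), Multiset.map_cons,
    ← insert_erase hyx, insert_val_of_notMem (notMem_erase y _), Multiset.map_cons,
    insert_erase hyx, insert_erase hx]
  refine congrArg _ (congrArg _ (Multiset.eq_replicate.2 ⟨?_, fun z hz => ?_⟩))
  · rw [Multiset.card_map, card_val, card_erase_of_mem hyx, card_erase_of_mem hx, Nat.sub_sub]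
  · obtain ⟨i, hi, rfl⟩ := Multiset.mem_map.1 hz
    simp only [mem_val, mem_erase] at hi
    exact h i hi.2.2 hi.2.1 hi.1

/-- `G` is a tree of depth two whose root has `k` leaves and two further neighbors, the arms,
of degrees `a` and `b`. -/
def HasTwoArms {V : Type*} [Fintype V] (G : SimpleGraph V) [DecidableRel G.Adj] (k a b : ℕ) :
    Prop :=
  ∃ u, IsDepthTwoTree G u ∧
    (G.neighborFinset u).val.map (G.degree ·) = a ::ₘ b ::ₘ Multiset.replicate k 1

variable {V W : Type*} [Fintype V] [Fintype W] {G : SimpleGraph V} {H : SimpleGraph W}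
  [DecidableRel G.Adj] [DecidableRel H.Adj] {k a b : ℕ}

theorem HasTwoArms.isBipartite (hG : HasTwoArms G k a b) : G.IsBipartite :=
  let ⟨_, hu, _⟩ := hG; hu.isBipartite

theorem HasTwoArms.nonempty_iso (hG : HasTwoArms G k a b) (hH : HasTwoArms H k a b) :
    Nonempty (G ≃g H) := by
  obtain ⟨u, hu, hGu⟩ := hG
  obtain ⟨w, hw, hHw⟩ := hH
  exact hu.nonempty_iso hw (hGu.trans hHw.symm)

theorem HasTwoArms.sum_comp_degree (hG : HasTwoArms G k a b) (φ : ℕ → ℕ) :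
    ∑ v, φ (G.degree v) = φ (k + 2) + φ a + φ b + (Fintype.card V - 3) * φ 1 := by
  obtain ⟨u, hu, hdeg⟩ := hG
  have hdegu : G.degree u = k + 2 := by
    rw [← card_neighborFinset_eq_degree, card_def, ← Multiset.card_map (G.degree ·), hdeg]
    simp
  have hsum : ∑ c ∈ G.neighborFinset u, φ (G.degree c) = φ a + φ b + k * φ 1 := by
    have := congrArg (fun M => (M.map φ).sum) hdeg
    simpa [add_assoc] using this
  have hcard : k + 3 ≤ Fintype.card V := by
    have := G.degree_lt_card_verts u
    lia
  obtain ⟨l, hl⟩ := Nat.exists_eq_add_of_le hcard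
  rw [hu.sum_comp_degree, hsum, hdegu, hl, smul_eq_mul, show k + 3 + l - (k + 2 + 1) = l by lia,
    show k + 3 + l - 3 = k + l by lia]
  ring

end TwoArms

section NumberedModel

/-- A tree on `0, …, n - 1` with two arms whose root `u` is joined to the other numbers up to `m`,
where the arm `w` carries the next `c` numbers and the arm `v` the remaining ones. -/
def numberedTwoArmed (n u v w m c : ℕ) : SimpleGraph (Fin n) :=
  SimpleGraph.fromRel fun i j =>
    (i.val = u ∧ j.val ≤ m) ∨ (i.val = v ∧ m + c < j.val) ∨
      (i.val = w ∧ m < j.val ∧ j.val ≤ m + c)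

variable {n u v w m c : ℕ}

theorem isDepthTwoTree_numberedTwoArmed (huv : u ≠ v) (huw : u ≠ w)
    (hum : u ≤ m) (hvm : v ≤ m) (hwm : w ≤ m) (hn : m + c < n) :
    IsDepthTwoTree (numberedTwoArmed n u v w m c) ⟨u, by lia⟩ where
  not_adj_of_adj i j := by
    simp only [numberedTwoArmed, fromRel_adj, ne_eq, Fin.ext_iff]
    lia
  exists_parent i := by
    simp only [numberedTwoArmed, fromRel_adj, ne_eq, Fin.ext_iff]
    intro hi hui
    refine ⟨⟨if m + c < i then v else w, by lia⟩, by grind, fun x => ?_⟩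
    grind

theorem degree_numberedTwoArmed_left [DecidableRel (numberedTwoArmed n u v w m c).Adj]
    (huv : u ≠ v) (hvw : v ≠ w) (hum : u ≤ m) (hvm : v ≤ m) (hn : m + c < n) :
    (numberedTwoArmed n u v w m c).degree ⟨v, by lia⟩ = n - m - c := by
  have hnbr : (numberedTwoArmed n u v w m c).neighborFinset ⟨v, by lia⟩ =
      insert ⟨u, by lia⟩ (Ioi ⟨m + c, hn⟩) := by
    ext i
    rw [mem_neighborFinset]
    simp only [numberedTwoArmed, fromRel_adj, mem_insert, mem_Ioi, ne_eq, Fin.ext_iff, Fin.lt_def,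
      true_and]
    omega
  have hnotMem : (⟨u, by lia⟩ : Fin n) ∉ Ioi (⟨m + c, hn⟩ : Fin n) := by
    simp only [mem_Ioi, Fin.lt_def]
    lia
  rw [← card_neighborFinset_eq_degree, hnbr, card_insert_of_notMem hnotMem, Fin.card_Ioi]
  lia

theorem degree_numberedTwoArmed_right [DecidableRel (numberedTwoArmed n u v w m c).Adj]
    (huw : u ≠ w) (hvw : v ≠ w) (hum : u ≤ m) (hwm : w ≤ m) (hn : m + c < n) :
    (numberedTwoArmed n u v w m c).degree ⟨w, by lia⟩ = c + 1 := by
  have hnbr : (numberedTwoArmed n u v w m c).neighborFinset ⟨w, by lia⟩ =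
      insert ⟨u, by lia⟩ (Ioc ⟨m, by lia⟩ ⟨m + c, hn⟩) := by
    ext i
    rw [mem_neighborFinset]
    simp only [numberedTwoArmed, fromRel_adj, mem_insert, mem_Ioc, ne_eq, Fin.ext_iff, Fin.lt_def,
      Fin.le_def, true_and]
    omega
  have hnotMem : (⟨u, by lia⟩ : Fin n) ∉ Ioc (⟨m, by lia⟩ : Fin n) ⟨m + c, hn⟩ := by
    simp only [mem_Ioc, Fin.lt_def]
    lia
  rw [← card_neighborFinset_eq_degree, hnbr, card_insert_of_notMem hnotMem, Fin.card_Ioc]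
  lia

theorem hasTwoArms_numberedTwoArmed [DecidableRel (numberedTwoArmed n u v w m c).Adj]
    (huv : u ≠ v) (huw : u ≠ w) (hvw : v ≠ w) (hum : u ≤ m) (hvm : v ≤ m) (hwm : w ≤ m)
    (hn : m + c < n) :
    HasTwoArms (numberedTwoArmed n u v w m c) (m - 2) (n - m - c) (c + 1) := by
  have hroot := isDepthTwoTree_numberedTwoArmed huv huw hum hvm hwm hn
  have hnbr : (numberedTwoArmed n u v w m c).neighborFinset ⟨u, by lia⟩ =
      (Iic (⟨m, by lia⟩ : Fin n)).erase ⟨u, by lia⟩ := by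
    ext i
    rw [mem_neighborFinset]
    simp only [numberedTwoArmed, fromRel_adj, mem_erase, mem_Iic, ne_eq, Fin.ext_iff, Fin.le_def,
      true_and]
    omega
  have hcard : #((numberedTwoArmed n u v w m c).neighborFinset ⟨u, by lia⟩) = m := by
    rw [hnbr, card_erase_of_mem (mem_Iic.2 (Fin.le_def.2 hum)), Fin.card_Iic, Nat.add_sub_cancel]
  refine ⟨_, hroot, ?_⟩
  rw [map_val_eq_cons_cons_replicate (x := ⟨v, by lia⟩) (y := ⟨w, by lia⟩) (b := 1), hcard,
    degree_numberedTwoArmed_left huv hvw hum hvm hn,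
    degree_numberedTwoArmed_right huw hvw hum hwm hn]
  · simpa [hnbr, Fin.ext_iff] using ⟨huv.symm, hvm⟩
  · simpa [hnbr, Fin.ext_iff] using ⟨huw.symm, hwm⟩
  · simpa [Fin.ext_iff] using hvw
  · intro i hi hiv hiw
    simp only [hnbr, mem_erase, mem_Iic, ne_eq, Fin.ext_iff, Fin.le_def] at hi hiv hiw
    refine degree_eq_one_iff_existsUnique_adj.2 ⟨⟨u, by lia⟩, ?_, fun x => ?_⟩ <;>
      simp only [numberedTwoArmed, fromRel_adj, ne_eq, Fin.ext_iff] <;> lia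

theorem hasTwoArms_BTree_zero_right {p q k : ℕ} [DecidableRel (BTree p q k 0).Adj] (hq : 2 ≤ q)
    (hk : k < p) : HasTwoArms (BTree p q k 0) (q - 2) (p - k) (k + 1) := by
  classical
  have heq : BTree p q k 0 = numberedTwoArmed (p + q) 0 1 2 q k := by
    ext i j
    simp only [BTree, numberedTwoArmed, fromRel_adj, ne_eq, Fin.ext_iff]
    omega
  convert hasTwoArms_numberedTwoArmed (n := p + q) (u := 0) (v := 1) (w := 2) (m := q) (c := k)
    (by lia) (by lia) (by lia) (by lia) (by lia) (by lia) (by lia) using 1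
  lia

theorem hasTwoArms_BTree_zero_one {p q : ℕ} [DecidableRel (BTree p q 0 1).Adj] (hp : 2 ≤ p)
    (hq : 3 ≤ q) : HasTwoArms (BTree p q 0 1) (q - 2) (p - 1) 2 := by
  classical
  have heq : BTree p q 0 1 = numberedTwoArmed (p + q) 0 1 3 q 1 := by
    ext i j
    simp only [BTree, numberedTwoArmed, fromRel_adj, ne_eq, Fin.ext_iff]
    omega
  convert hasTwoArms_numberedTwoArmed (n := p + q) (u := 0) (v := 1) (w := 3) (m := q) (c := 1)
    (by lia) (by lia) (by lia) (by lia) (by lia) (by lia) (by lia) using 1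
  lia

theorem hasTwoArms_DTree_zero_one {p q : ℕ} [DecidableRel (DTree p q 0 1).Adj] (hp : 3 ≤ p)
    (hq : 2 ≤ q) : HasTwoArms (DTree p q 0 1) (p - 2) (q - 1) 2 := by
  classical
  have heq : DTree p q 0 1 = numberedTwoArmed (p + q) 1 0 3 p 1 := by
    ext i j
    simp only [DTree, numberedTwoArmed, fromRel_adj, ne_eq, Fin.ext_iff]
    omega
  convert hasTwoArms_numberedTwoArmed (n := p + q) (u := 1) (v := 0) (w := 3) (m := p) (c := 1)
    (by lia) (by lia) (by lia) (by lia) (by lia) (by lia) (by lia) using 1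
  lia

end NumberedModel

section BipartiteTrees

variable {V : Type*} {G : SimpleGraph V} {s t : Finset V} {u x y : V}

theorem mem_or_mem_of_isBipartiteWith [Nontrivial V] (hG : G.Preconnected)
    (hst : G.IsBipartiteWith s t) (v : V) : v ∈ s ∨ v ∈ t :=
  isBipartiteWith_support_subset hst (hG.support_eq_univ ▸ Set.mem_univ v)

variable [Fintype V]

theorem sum_univ_of_isBipartiteWith [Nontrivial V] {M : Type*} [AddCommMonoid M]
    (hG : G.Preconnected) (hst : G.IsBipartiteWith s t) (φ : V → M) :
    ∑ v, φ v = ∑ v ∈ s, φ v + ∑ v ∈ t, φ v := by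
  rw [← sum_disjUnion (disjoint_coe.1 hst.disjoint)]
  refine sum_congr (ext fun v => ?_) fun _ _ => rfl
  simpa using mem_or_mem_of_isBipartiteWith hG hst v

theorem card_add_card_of_isBipartiteWith [Nontrivial V] (hG : G.Preconnected)
    (hst : G.IsBipartiteWith s t) : #s + #t = Fintype.card V := by
  rw [card_eq_sum_ones, card_eq_sum_ones, Fintype.card_eq_sum_ones]
  exact (sum_univ_of_isBipartiteWith hG hst fun _ => 1).symm

variable [DecidableRel G.Adj]

theorem sum_degree_add_two_eq (hG : G.IsTree) : ∑ v, G.degree v + 2 = 2 * Fintype.card V := by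
  rw [sum_degrees_eq_twice_card_edges, ← hG.card_edgeFinset]
  ring

theorem sum_degree_sub_one_eq [Nontrivial V] (hG : G.IsTree) (hst : G.IsBipartiteWith s t) :
    ∑ v ∈ s, (G.degree v - 1) = #t - 1 := by
  have hsum := isBipartiteWith_sum_degrees_eq_card_edges hst
  have hedges := hG.card_edgeFinset
  have hcard := card_add_card_of_isBipartiteWith hG.connected.preconnected hst
  rw [sum_tsub_distrib s fun v _ => hG.connected.preconnected.degree_pos_of_nontrivial v,
    ← card_eq_sum_ones]
  lia

theorem sum_degree_sq_add_card [Nontrivial V] (hG : G.Preconnected) :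
    ∑ v, G.degree v ^ 2 + Fintype.card V =
      ∑ v, (G.degree v - 1) ^ 2 + 2 * ∑ v, G.degree v := by
  rw [← card_univ, card_eq_sum_ones, ← sum_add_distrib, mul_sum, ← sum_add_distrib]
  refine sum_congr rfl fun v _ => ?_
  obtain ⟨d, hd⟩ := Nat.exists_eq_succ_of_ne_zero (hG.degree_pos_of_nontrivial v).ne'
  rw [hd, Nat.succ_eq_add_one, Nat.add_sub_cancel]
  ring

theorem neighborFinset_eq_of_degree_eq_card (hst : G.IsBipartiteWith s t) (hu : u ∈ s)
    (hdeg : G.degree u = #t) : G.neighborFinset u = t :=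
  eq_of_subset_of_card_le (isBipartiteWith_neighborFinset_subset hst hu) hdeg.ge

theorem isDepthTwoTree_of_degree_eq_card [Nontrivial V] (hG : G.IsTree)
    (hst : G.IsBipartiteWith s t) (hu : u ∈ s) (hdeg : G.degree u = #t) :
    IsDepthTwoTree G u where
  not_adj_of_adj c d hc hd hcd :=
    Set.disjoint_left.1 hst.disjoint (hst.mem_of_mem_adj' (hst.mem_of_mem_adj hu hc) hcd.symm)
      (hst.mem_of_mem_adj hu hd)
  exists_parent v hvu huv := by
    have hadj w : G.Adj u w ↔ w ∈ t := by
      rw [← mem_neighborFinset, neighborFinset_eq_of_degree_eq_card hst hu hdeg]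
    have hv : v ∈ s := (mem_or_mem_of_isBipartiteWith hG.connected.preconnected hst v).resolve_right
      fun hv => huv ((hadj v).2 hv)
    have hle := add_le_sum (f := (G.degree · - 1)) (fun _ _ => Nat.zero_le _) hu hv hvu.symm
    have hpos := hG.connected.preconnected.degree_pos_of_nontrivial v
    rw [sum_degree_sub_one_eq hG hst] at hle
    obtain ⟨c, hc, hunique⟩ := degree_eq_one_iff_existsUnique_adj.1 (by lia : G.degree v = 1)
    exact ⟨c, (hadj c).2 (hst.mem_of_mem_adj hv hc), fun w => ⟨hunique w, fun hw => hw ▸ hc⟩⟩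

theorem hasTwoArms_of_sum_eq [Nontrivial V] (hG : G.IsTree) (hst : G.IsBipartiteWith s t)
    (hu : u ∈ s) (hdeg : G.degree u = #t) (hx : x ∈ t) (hy : y ∈ t) (hxy : x ≠ y)
    (hsum : (G.degree x - 1) + (G.degree y - 1) = #s - 1) :
    HasTwoArms G (#t - 2) (G.degree x) (G.degree y) := by
  classical
  refine ⟨u, isDepthTwoTree_of_degree_eq_card hG hst hu hdeg, ?_⟩
  rw [neighborFinset_eq_of_degree_eq_card hst hu hdeg]
  refine map_val_eq_cons_cons_replicate hx hy hxy fun i hi hix hiy => ?_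
  have hle : ∑ v ∈ {x, y, i}, (G.degree v - 1) ≤ ∑ v ∈ t, (G.degree v - 1) :=
    sum_le_sum_of_subset (by simp [insert_subset_iff, hx, hy, hi])
  rw [sum_degree_sub_one_eq hG hst.symm, sum_insert (by simp [hxy, hix.symm]),
    sum_pair hiy.symm] at hle
  have hpos := hG.connected.preconnected.degree_pos_of_nontrivial i
  lia

theorem hasTwoArms_of_degree_add_eq [Nontrivial V] (hG : G.IsTree) (hst : G.IsBipartiteWith s t)
    (hu : u ∈ s) (hdeg : G.degree u = #t) (ht : 2 ≤ #t) (hx : x ∈ t) {r : ℕ} (hr : r ≤ 1)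
    (hxr : G.degree x + r = #s) : HasTwoArms G (#t - 2) (G.degree x) (r + 1) := by
  classical
  have hpos v := hG.connected.preconnected.degree_pos_of_nontrivial v
  have hsum : ∑ v ∈ t.erase x, (G.degree v - 1) = r := by
    have := sum_degree_sub_one_eq hG hst.symm
    rw [← add_sum_erase t _ hx] at this
    have := hpos x
    lia
  obtain ⟨y, hy, hyr⟩ : ∃ y ∈ t.erase x, r ≤ G.degree y - 1 := by
    obtain rfl | rfl := Nat.le_one_iff_eq_zero_or_eq_one.1 hr
    · obtain ⟨y, hy⟩ : (t.erase x).Nonempty := by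
        rw [← card_pos, card_erase_of_mem hx]
        lia
      exact ⟨y, hy, Nat.zero_le _⟩
    · obtain ⟨y, hy, hne⟩ := exists_ne_zero_of_sum_ne_zero (hsum.trans_ne one_ne_zero)
      exact ⟨y, hy, Nat.one_le_iff_ne_zero.2 hne⟩
  have hle := hsum ▸ single_le_sum_of_canonicallyOrdered (f := (G.degree · - 1)) hy
  have hdegy : G.degree y = r + 1 := by
    have := hpos y
    lia
  rw [mem_erase] at hy
  have := hpos x
  exact hdegy ▸ hasTwoArms_of_sum_eq hG hst hu hdeg hx hy.2 hy.1.symm (by lia)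

theorem sum_degree_sub_one_sq_lt_of_degree_left [Nontrivial V] (hG : G.IsTree)
    (hst : G.IsBipartiteWith s t) (ht : 2 ≤ #t) (hcard : #t + 4 ≤ 2 * #s)
    (h0 : ¬ HasTwoArms G (#t - 2) #s 1) (h1 : ¬ HasTwoArms G (#t - 2) (#s - 1) 2)
    (h2 : ¬ HasTwoArms G (#t - 2) (#s - 2) 3) (hu : u ∈ s) (hdeg : G.degree u = #t) :
    ∑ v, (G.degree v - 1) ^ 2 < (#s - 1) ^ 2 + (#t - 2) ^ 2 + 1 := by
  have hsumt := sum_degree_sub_one_eq hG hst.symm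
  have hle x (hx : x ∈ t) : G.degree x - 1 ≤ #s - 3 := by
    have hxs := isBipartiteWith_degree_le' hst hx
    by_contra! hlt
    obtain hx0 | hx1 : G.degree x + 0 = #s ∨ G.degree x + 1 = #s := by lia
    · exact h0 (hx0 ▸ hasTwoArms_of_degree_add_eq hG hst hu hdeg ht hx zero_le_one hx0)
    · refine h1 ?_
      have := hasTwoArms_of_degree_add_eq hG hst hu hdeg ht hx le_rfl hx1
      rwa [← hx1]
  have hne x (hx : x ∈ t) y (hy : y ∈ t) (hxy : x ≠ y) (hdx : G.degree x - 1 = #s - 3) :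
      G.degree y - 1 ≠ 2 := fun hdy => by
    have := hG.connected.preconnected.degree_pos_of_nontrivial x
    have := hasTwoArms_of_sum_eq hG hst hu hdeg hx hy hxy (by lia)
    rw [show G.degree x = #s - 2 by lia, show G.degree y = 3 by lia] at this
    exact h2 this
  have hsqt := sum_sq_lt_sq_add_four (by lia) hle hne
  have hsqs := sum_sq_le_mul_sum (e := (G.degree · - 1)) fun v (hv : v ∈ s) =>
    Nat.sub_le_sub_right (isBipartiteWith_degree_le hst hv) 1
  rw [sum_degree_sub_one_eq hG hst] at hsqs
  rw [sum_univ_of_isBipartiteWith hG.connected.preconnected hst]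
  obtain ⟨a, ha⟩ := Nat.exists_eq_add_of_le (show 3 ≤ #s by lia)
  obtain ⟨b, hb⟩ := Nat.exists_eq_add_of_le ht
  simp only [ha, hb, show 3 + a - 3 = a by lia, show 3 + a - 1 = a + 2 by lia,
    show 2 + b - 1 = b + 1 by lia, show 2 + b - 2 = b by lia] at hsqs hsqt ⊢
  nlinarith

theorem sum_degree_sub_one_sq_lt_of_degree_right [Nontrivial V] (hG : G.IsTree)
    (hst : G.IsBipartiteWith s t) (hs : 2 ≤ #s) (ht : 3 ≤ #t)
    (hleft : ∀ u ∈ s, G.degree u ≠ #t) (h3 : ¬ HasTwoArms G (#s - 2) (#t - 1) 2) (hx : x ∈ t)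
    (hdeg : G.degree x = #s) :
    ∑ v, (G.degree v - 1) ^ 2 < (#s - 1) ^ 2 + (#t - 2) ^ 2 + 1 := by
  have hle u (hu : u ∈ s) : G.degree u - 1 ≤ #t - 3 := by
    have hut := (isBipartiteWith_degree_le hst hu).lt_of_ne (hleft u hu)
    by_contra! hlt
    have hu1 : G.degree u + 1 = #t := by lia
    have := hasTwoArms_of_degree_add_eq hG hst.symm hx hdeg hs hu le_rfl hu1
    refine h3 ?_
    rwa [← hu1]
  have hsqs := sum_sq_lt_sq_add_one (by rw [sum_degree_sub_one_eq hG hst]; lia) hle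
  have hsqt := sum_sq_le_mul_sum (e := (G.degree · - 1)) fun v (hv : v ∈ t) =>
    Nat.sub_le_sub_right (isBipartiteWith_degree_le' hst hv) 1
  rw [sum_degree_sub_one_eq hG hst.symm, ← sq] at hsqt
  rw [sum_univ_of_isBipartiteWith hG.connected.preconnected hst]
  rw [show #t - 3 + 1 = #t - 2 by lia] at hsqs
  lia

theorem sum_degree_sub_one_sq_lt_of_forall_degree_ne [Nontrivial V] (hG : G.IsTree)
    (hst : G.IsBipartiteWith s t) (hs : 3 ≤ #s) (ht : 3 ≤ #t)
    (hleft : ∀ u ∈ s, G.degree u ≠ #t) (hright : ∀ x ∈ t, G.degree x ≠ #s) :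
    ∑ v, (G.degree v - 1) ^ 2 < (#s - 1) ^ 2 + (#t - 2) ^ 2 + 1 := by
  have hsqs := sum_sq_le_sq_add_sq (s := s) (e := (G.degree · - 1)) (m := #t - 2) (r := 1)
    (by rw [sum_degree_sub_one_eq hG hst]; lia) (by lia) fun u hu => by
      have := (isBipartiteWith_degree_le hst hu).lt_of_ne (hleft u hu)
      lia
  have hsqt := sum_sq_le_sq_add_sq (s := t) (e := (G.degree · - 1)) (m := #s - 2) (r := 1)
    (by rw [sum_degree_sub_one_eq hG hst.symm]; lia) (by lia) fun x hx => by
      have := (isBipartiteWith_degree_le' hst hx).lt_of_ne (hright x hx)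
      lia
  rw [sum_univ_of_isBipartiteWith hG.connected.preconnected hst]
  have : (#s - 1) ^ 2 = (#s - 2) ^ 2 + 2 * (#s - 2) + 1 := by
    rw [show #s - 1 = #s - 2 + 1 by lia]
    ring
  lia

theorem sum_degree_sq_lt [Nontrivial V] (hG : G.IsTree) (hst : G.IsBipartiteWith s t)
    (ht : 3 ≤ #t) (hcard : #t + 4 ≤ 2 * #s)
    (h0 : ¬ HasTwoArms G (#t - 2) #s 1) (h1 : ¬ HasTwoArms G (#t - 2) (#s - 1) 2)
    (h2 : ¬ HasTwoArms G (#t - 2) (#s - 2) 3) (h3 : ¬ HasTwoArms G (#s - 2) (#t - 1) 2) :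
    ∑ v, G.degree v ^ 2 < #s ^ 2 + (#t - 1) ^ 2 + #s + #t + 1 := by
  have hsq : ∑ v, (G.degree v - 1) ^ 2 < (#s - 1) ^ 2 + (#t - 2) ^ 2 + 1 := by
    by_cases hleft : ∃ u ∈ s, G.degree u = #t
    · obtain ⟨u, hu, hdeg⟩ := hleft
      exact sum_degree_sub_one_sq_lt_of_degree_left hG hst (by lia) hcard h0 h1 h2 hu hdeg
    push Not at hleft
    by_cases hright : ∃ x ∈ t, G.degree x = #s
    · obtain ⟨x, hx, hdeg⟩ := hright
      exact sum_degree_sub_one_sq_lt_of_degree_right hG hst (by lia) ht hleft h3 hx hdeg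
    push Not at hright
    exact sum_degree_sub_one_sq_lt_of_forall_degree_ne hG hst (by lia) ht hleft hright
  have hsum := sum_degree_add_two_eq hG
  have hadd := sum_degree_sq_add_card hG.connected.preconnected
  rw [← card_add_card_of_isBipartiteWith hG.connected.preconnected hst] at hsum hadd
  obtain ⟨a, ha⟩ := Nat.exists_eq_add_of_le (show 1 ≤ #s by lia)
  obtain ⟨b, hb⟩ := Nat.exists_eq_add_of_le (show 2 ≤ #t by lia)
  simp only [ha, hb, show 1 + a - 1 = a by lia, show 2 + b - 1 = b + 1 by lia,
    show 2 + b - 2 = b by lia] at hsq hsum hadd ⊢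
  nlinarith

end BipartiteTrees

theorem TreeBip.exists_isBipartiteWith {p q : ℕ} {G : SimpleGraph (Fin (p + q))}
    (hG : TreeBip p q G) :
    ∃ s t : Finset (Fin (p + q)), #s = p ∧ #t = q ∧ G.IsBipartiteWith s t := by
  obtain ⟨-, s, hs, hadj⟩ := hG
  refine ⟨s, sᶜ, hs, by rw [card_compl, hs, Fintype.card_fin, Nat.add_sub_cancel_left],
    disjoint_coe.2 disjoint_compl_right, fun x y hxy => ?_⟩
  have := hadj hxy
  simp only [coe_compl, Set.mem_compl_iff, mem_coe]
  tauto

theorem stmt_8_general (p q : ℕ) (hq : 3 ≤ q) (h : q + 4 ≤ 2 * p)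
    (T : SimpleGraph (Fin (p + q))) (hT : TreeBip p q T)
    (h0 : ¬ Nonempty (T ≃g BTree p q 0 0))
    (h1 : ¬ Nonempty (T ≃g BTree p q 0 1))
    (h2 : ¬ Nonempty (T ≃g BTree p q 2 0))
    (h3 : ¬ Nonempty (T ≃g DTree p q 0 1)) :
    SLt T (DTree p q 0 1) := by
  classical
  obtain ⟨s, t, hs, ht, hst⟩ := hT.exists_isBipartiteWith
  have : Nontrivial (Fin (p + q)) := Fin.nontrivial_iff_two_le.2 (by lia)
  have hD := hasTwoArms_DTree_zero_one (p := p) (q := q) (by lia) (by lia)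
  have hsqT := sum_degree_sq_lt hT.1 hst
  rw [hs, ht] at hsqT
  specialize hsqT hq h
    (fun hT0 => h0 (hT0.nonempty_iso (hasTwoArms_BTree_zero_right (by lia) (by lia))))
    (fun hT1 => h1 (hT1.nonempty_iso (hasTwoArms_BTree_zero_one (by lia) hq)))
    (fun hT2 => h2 (hT2.nonempty_iso (hasTwoArms_BTree_zero_right (by lia) (by lia))))
    (fun hT3 => h3 (hT3.nonempty_iso hD))
  have hdegT := sum_degree_add_two_eq hT.1
  have hdegD := hD.sum_comp_degree id
  have hsqD := hD.sum_comp_degree (· ^ 2)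
  simp only [Fintype.card_fin, id, show p - 2 + 2 = p by lia] at hdegT hdegD hsqD
  exact SLt.of_sum_degree_sq_lt (by rw [Fintype.card_fin]; lia) hT.1.isAcyclic hD.isBipartite
    (by lia) (by lia)

/-- For `4 ≤ p < q`, `n = p + q` and `2p = q + 4`, every tree
`T ∈ 𝒯_n^{p,q}` isomorphic to none of `B_{p,q}^{0,0}`, `B_{p,q}^{0,1}`,
`B_{p,q}^{2,0}`, `D_{p,q}^{0,1}` satisfies `T ≺_s D_{p,q}^{0,1}`: in this case
`D_{p,q}^{0,1}` is the unique fourth last tree in the S-order among `𝒯_n^{p,q}`. -/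
theorem stmt_8 (p q : ℕ) (hp : 4 ≤ p) (hpq : p < q) (h : 2 * p = q + 4)
    (T : SimpleGraph (Fin (p + q))) (hT : TreeBip p q T)
    (h0 : ¬ Nonempty (T ≃g BTree p q 0 0))
    (h1 : ¬ Nonempty (T ≃g BTree p q 0 1))
    (h2 : ¬ Nonempty (T ≃g BTree p q 2 0))
    (h3 : ¬ Nonempty (T ≃g DTree p q 0 1)) :
    SLt T (DTree p q 0 1) :=
  stmt_8_general p q (by lia) h.ge T hT h0 h1 h2 h3
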